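/- Suppose there exist γ ∈ [0, 1), L > 0, and nonnegative reals c_0, c_1, c_2, … with c_0 > 0 such that l ↦ A(l) restricted to [0, L] is a continuous strictly increasing bijection onto [0, 1] whose inverse satisfies A⁻¹(w) = Σ_{j=0}^∞ c_j · w^{j+γ} for all w ∈ [0, 1]. Then for each fixed k, the leading large-N asymptotics of the expected k-th nearest-neighbor distance is lim_{N→∞} N^γ · E[D_k(N)] = c_0 · Γ(k + γ)/Γ(k). -/

import Mathlib

open MeasureTheory Metric Filter
open scoped ENNReal Topology

/-- The `k`-th smallest value (1-indexed) among the `N` real numbers `f 0, …, f (N-1)`. -/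
noncomputable def kthVal {N : ℕ} (k : ℕ) (f : Fin N → ℝ) : ℝ :=
  (((Finset.univ : Finset (Fin N)).val.map f).sort (· ≤ ·)).getD (k - 1) 0


/-- Binomial tail: probability that fewer than `k` of `N` Bernoulli(`a`) trials succeed. -/
noncomputable def binTail (k N : ℕ) (a : ℝ) : ℝ :=
  ∑ i ∈ Finset.range k, (N.choose i : ℝ) * a ^ i * (1 - a) ^ (N - i)

lemma sorted_lt_getElem_iff (l : ℝ) : ∀ (s : List ℝ) (_ : s.Pairwise (· ≤ ·)) (m : ℕ)
    (_ : m < s.length), l < s.getD m 0 ↔ s.countP (fun a => decide (a ≤ l)) ≤ m := by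
  intro s
  induction s with
  | nil => intro _ m hm; simp at hm
  | cons a t ih =>
    intro hs m hm
    rw [List.pairwise_cons] at hs
    by_cases hal : a ≤ l
    · cases m with
      | zero => simp [hal]
      | succ m =>
        have := ih hs.2 m (by simpa using hm)
        simpa [hal] using this
    · have h0 : List.countP (fun a => decide (a ≤ l)) (a :: t) = 0 := by
        rw [List.countP_eq_zero]
        intro b hb
        rcases List.mem_cons.1 hb with rfl | hb
        · simpa using hal
        · have := hs.1 b hb
          push Not at hal
          simp; linarith
      rw [h0]
      simp only [Nat.zero_le, iff_true]
      rw [List.getD_eq_getElem _ _ hm]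
      have hmem : (a :: t)[m] ∈ a :: t := List.getElem_mem hm
      rcases List.mem_cons.1 hmem with h | h
      · rw [h]; exact not_le.1 hal
      · exact lt_of_lt_of_le (not_le.1 hal) (hs.1 _ h)

lemma lt_kthVal_iff {N k : ℕ} (hk : 1 ≤ k) (hN : k ≤ N) (f : Fin N → ℝ) (l : ℝ) :
    l < kthVal k f ↔ (Finset.univ.filter (fun i => f i ≤ l)).card < k := by
  classical
  unfold kthVal
  rw [sorted_lt_getElem_iff l _ (Multiset.pairwise_sort _ _) (k-1) (by simp; omega)]
  have : List.countP (fun a => decide (a ≤ l))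
      (((Finset.univ : Finset (Fin N)).val.map f).sort (· ≤ ·))
      = (Finset.univ.filter (fun i => f i ≤ l)).card := by
    rw [← Multiset.coe_countP, Multiset.sort_eq, Multiset.countP_map]
    rfl
  rw [this]
  omega

lemma kthVal_nonneg {N k : ℕ} (f : Fin N → ℝ) (hf : ∀ i, 0 ≤ f i) : 0 ≤ kthVal k f := by
  unfold kthVal
  by_cases h : k - 1 < (((Finset.univ : Finset (Fin N)).val.map f).sort (· ≤ ·)).length
  · rw [List.getD_eq_getElem _ _ h]
    have := List.getElem_mem h
    rw [Multiset.mem_sort, Multiset.mem_map] at this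
    obtain ⟨i, _, hi⟩ := this
    rw [← hi]; exact hf i
  · rw [List.getD_eq_default _ _ (by omega)]

lemma binTail_continuous (k N : ℕ) : Continuous (binTail k N) := by
  unfold binTail; fun_prop

lemma set_eq_iUnion {M : Type*} {N : ℕ} (k : ℕ) (B : Set M) [DecidablePred (· ∈ B)] :
    {ω : Fin N → M | (Finset.univ.filter (fun i => ω i ∈ B)).card < k}
    = ⋃ S ∈ (Finset.univ : Finset (Fin N)).powerset.filter (fun S => S.card < k),
        Set.pi Set.univ (fun i => if i ∈ S then B else Bᶜ) := by
  ext ω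
  simp only [Set.mem_ofPred_eq, Set.mem_iUnion, Set.mem_pi, Set.mem_univ, true_imp_iff,
    Finset.mem_filter, Finset.mem_powerset, Finset.subset_univ, true_and, exists_prop]
  constructor
  · intro h
    refine ⟨_, h, fun i => ?_⟩
    by_cases hi : ω i ∈ B <;> simp [hi]
  · rintro ⟨S, hS, h⟩
    convert hS
    ext i
    have := h i
    by_cases hi : i ∈ S
    · simpa [hi] using this
    · simpa [hi] using this

lemma prob_count {M : Type*} [MeasurableSpace M] (μ : Measure M) [IsProbabilityMeasure μ]
    {N k : ℕ} (hN : k ≤ N + 1) (B : Set M) (hB : MeasurableSet B) [DecidablePred (· ∈ B)] :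
    MeasurableSet {ω : Fin N → M | (Finset.univ.filter (fun i => ω i ∈ B)).card < k} ∧
    (Measure.pi fun _ : Fin N => μ)
      {ω : Fin N → M | (Finset.univ.filter (fun i => ω i ∈ B)).card < k}
    = ENNReal.ofReal (binTail k N (μ B).toReal) := by
  have hm : ∀ S : Finset (Fin N), MeasurableSet
      (Set.pi Set.univ (fun i => if i ∈ S then B else Bᶜ) : Set (Fin N → M)) := by
    intro S
    refine MeasurableSet.univ_pi fun i => ?_
    split_ifs
    · exact hB
    · exact hB.compl
  rw [set_eq_iUnion]
  refine ⟨Finset.measurableSet_biUnion _ fun S _ => hm S, ?_⟩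
  have ha0 : 0 ≤ (μ B).toReal := ENNReal.toReal_nonneg
  have ha1 : (μ B).toReal ≤ 1 := by
    have := prob_le_one (μ := μ) (s := B)
    exact ENNReal.toReal_le_of_le_ofReal zero_le_one (by simpa using this)
  have hBc : μ Bᶜ = ENNReal.ofReal (1 - (μ B).toReal) := by
    rw [prob_compl_eq_one_sub hB, ENNReal.ofReal_sub _ ha0, ENNReal.ofReal_one,
      ENNReal.ofReal_toReal (measure_ne_top _ _)]
  have hB' : μ B = ENNReal.ofReal (μ B).toReal :=
    (ENNReal.ofReal_toReal (measure_ne_top _ _)).symm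
  rw [measure_biUnion_finset _ fun S _ => hm S]
  · have h1 : ∀ S : Finset (Fin N), (Measure.pi fun _ : Fin N => μ)
        (Set.pi Set.univ (fun i => if i ∈ S then B else Bᶜ)) =
        ENNReal.ofReal ((μ B).toReal ^ S.card * (1 - (μ B).toReal) ^ (N - S.card)) := by
      intro S
      rw [Measure.pi_pi]
      have : ∀ i, μ (if i ∈ S then B else Bᶜ) =
        ENNReal.ofReal (if i ∈ S then (μ B).toReal else 1 - (μ B).toReal) := by
        intro i
        split_ifs
        · exact hB'
        · exact hBc
      simp_rw [this]
      rw [← ENNReal.ofReal_prod_of_nonneg (fun i _ => by split_ifs <;> linarith)]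
      congr 1
      rw [Finset.prod_ite]
      simp only [Finset.prod_const]
      congr 2
      · simp
      · rw [Finset.filter_not, Finset.card_sdiff_of_subset (by simp)]
        simp
    simp_rw [h1]
    rw [← ENNReal.ofReal_sum_of_nonneg (fun S _ => by
      have : 0 ≤ 1 - (μ B).toReal := by linarith
      positivity)]
    congr 1
    rw [Finset.sum_filter, Finset.sum_powerset_apply_card (fun m => if m < k then
      (μ B).toReal ^ m * (1 - (μ B).toReal) ^ (N - m) else 0)]
    unfold binTail
    simp only [Finset.card_univ, Fintype.card_fin, smul_ite, smul_zero]
    rw [← Finset.sum_filter]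
    refine Finset.sum_congr ?_ fun i _ => by rw [nsmul_eq_mul, mul_assoc]
    ext i; simp; omega
  · intro S _ T _ hST
    refine Set.disjoint_left.2 fun ω h1 h2 => hST ?_
    ext i
    have a1 := h1 i trivial
    have a2 := h2 i trivial
    by_cases hi : i ∈ S <;> by_cases hj : i ∈ T
    · simp only [hi, hj]
    · simp only [hi, hj, if_true, if_false] at a1 a2
      exact absurd a1 a2
    · simp only [hi, hj, if_true, if_false] at a1 a2
      exact absurd a2 a1
    · simp only [hi, hj]

lemma expect_eq {M : Type*} [MetricSpace M] [MeasurableSpace M] [BorelSpace M]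
    [TopologicalSpace.SeparableSpace M]
    (μ : Measure M) [IsProbabilityMeasure μ] (x : M) {k N : ℕ} (hk : 1 ≤ k) (hN : k ≤ N) :
    ∫ ω : Fin N → M, kthVal k (fun i => dist x (ω i)) ∂(Measure.pi fun _ : Fin N => μ)
    = ∫ l in Set.Ioi (0:ℝ), binTail k N (μ (closedBall x l)).toReal := by
  classical
  have hset : ∀ l : ℝ, {ω : Fin N → M | l < kthVal k (fun i => dist x (ω i))} =
      {ω : Fin N → M | (Finset.univ.filter (fun i => ω i ∈ closedBall x l)).card < k} := by
    intro l
    ext ω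
    simp only [Set.mem_ofPred_eq, lt_kthVal_iff hk hN, mem_closedBall, dist_comm x]
  have hP := fun l : ℝ => prob_count μ (N := N) (k := k) (by omega) (closedBall x l)
    isClosed_closedBall.measurableSet
  simp_rw [← hset] at hP
  have hmeas : Measurable (fun ω : Fin N → M => kthVal k (fun i => dist x (ω i))) :=
    measurable_of_Ioi fun l => (hP l).1
  have hnn : ∀ ω : Fin N → M, 0 ≤ kthVal k (fun i => dist x (ω i)) :=
    fun ω => kthVal_nonneg _ fun i => dist_nonneg
  rw [integral_eq_lintegral_of_nonneg_ae (ae_of_all _ hnn) hmeas.aestronglyMeasurable,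
    lintegral_eq_lintegral_meas_lt _ (ae_of_all _ hnn) hmeas.aemeasurable]
  have hAm : Measurable (fun l : ℝ => (μ (closedBall x l)).toReal) := by
    refine Monotone.measurable fun a b hab => ?_
    exact ENNReal.toReal_mono (measure_ne_top _ _) (measure_mono (closedBall_subset_closedBall hab))
  rw [integral_eq_lintegral_of_nonneg_ae]
  · simp_rw [(hP _).2]
  · refine ae_of_all _ fun l => ?_
    have ha1 : (μ (closedBall x l)).toReal ≤ 1 :=
      ENNReal.toReal_le_of_le_ofReal zero_le_one (by simpa using prob_le_one)
    have : 0 ≤ 1 - (μ (closedBall x l)).toReal := by linarith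
    unfold binTail
    simp only [Pi.zero_apply]
    positivity
  · exact ((binTail_continuous k N).measurable.comp hAm).aestronglyMeasurable

lemma binTail_le (k N : ℕ) (a : ℝ) (h0 : 0 ≤ a) (h1 : a ≤ 1) (hN : k ≤ N) :
    binTail k N a ≤ (∑ i ∈ Finset.range k, (2:ℝ) ^ i * Real.exp k) * Real.exp (-(N * a / 2)) := by
  unfold binTail
  rw [Finset.sum_mul]
  refine Finset.sum_le_sum fun i hi => ?_
  have hik : i < k := Finset.mem_range.1 hi
  have e1 : (N.choose i : ℝ) * a ^ i ≤ 2 ^ i * Real.exp (N * a / 2) := by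
    have h := Real.pow_div_factorial_le_exp (N * a / 2) (by positivity) i
    have hc : (N.choose i : ℝ) ≤ (N:ℝ) ^ i / i.factorial := Nat.choose_le_pow_div i N
    calc (N.choose i : ℝ) * a ^ i ≤ (N:ℝ) ^ i / i.factorial * a ^ i := by gcongr
      _ = 2 ^ i * ((N * a / 2) ^ i / i.factorial) := by
        rw [div_pow, mul_pow]; field_simp
      _ ≤ _ := by gcongr
  have e2 : (1 - a) ^ (N - i) ≤ Real.exp k * Real.exp (-(N * a)) := by
    have h := Real.add_one_le_exp (-a)
    calc (1 - a) ^ (N - i) ≤ (Real.exp (-a)) ^ (N - i) := by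
          apply pow_le_pow_left₀ <;> linarith
      _ = Real.exp (((N - i : ℕ) : ℝ) * (-a)) := by rw [Real.exp_nat_mul]
      _ ≤ Real.exp (k + -(N * a)) := by
        apply Real.exp_le_exp.2
        rw [Nat.cast_sub (by omega)]
        have : (i:ℝ) ≤ k := by exact_mod_cast hik.le
        have h2 : (i:ℝ) * a ≤ k * 1 := by gcongr
        nlinarith
      _ = _ := Real.exp_add _ _
  have h1a : 0 ≤ 1 - a := by linarith
  calc (N.choose i : ℝ) * a ^ i * (1 - a) ^ (N - i)
      ≤ (2 ^ i * Real.exp (N * a / 2)) * (Real.exp k * Real.exp (-(N * a))) := by gcongr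
    _ = 2 ^ i * Real.exp k * (Real.exp (N * a / 2) * Real.exp (-(N * a))) := by ring
    _ = _ := by
      rw [← Real.exp_add]; congr 2; ring

lemma binTail_nonneg (k N : ℕ) (a : ℝ) (h0 : 0 ≤ a) (h1 : a ≤ 1) : 0 ≤ binTail k N a := by
  have : 0 ≤ 1 - a := by linarith
  unfold binTail
  positivity

lemma binTail_one (k N : ℕ) (hN : k ≤ N) : binTail k N 1 = 0 := by
  unfold binTail
  refine Finset.sum_eq_zero fun i hi => ?_
  have hik : i < k := Finset.mem_range.1 hi
  rw [sub_self, zero_pow (by omega), mul_zero]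

lemma binTail_tendsto (k : ℕ) (p : ℕ → ℝ) (r : ℝ)
    (hr : Tendsto (fun n : ℕ => n * p n) atTop (𝓝 r)) :
    Tendsto (fun N => binTail k N (p N)) atTop
      (𝓝 (∑ i ∈ Finset.range k, Real.exp (-r) * r ^ i / i.factorial)) := by
  unfold binTail
  exact tendsto_finsetSum _ fun i _ =>
    ProbabilityTheory.tendsto_choose_mul_pow_of_tendsto_mul_atTop i hr

lemma gamma_sum (γ : ℝ) (hγ : 0 < γ) (k : ℕ) (hk : 1 ≤ k) :
    ∑ i ∈ Finset.range k, γ * Real.Gamma (i + γ) / i.factorial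
      = Real.Gamma (k + γ) / Real.Gamma k := by
  induction k, hk using Nat.le_induction with
  | base => simp [add_comm (1:ℝ), Real.Gamma_add_one hγ.ne']
  | succ n hn ih =>
    rw [Finset.sum_range_succ, ih]
    have hn0 : (n:ℝ) ≠ 0 := by positivity
    have e1 : Real.Gamma ((n + 1 : ℕ) + γ) = (n + γ) * Real.Gamma (n + γ) := by
      rw [← Real.Gamma_add_one (by positivity)]; congr 1; push_cast; ring
    have e2 : (n.factorial : ℝ) = n * Real.Gamma n := by
      rw [← Real.Gamma_add_one hn0, Real.Gamma_nat_eq_factorial]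
    have e3 : Real.Gamma ((n + 1 : ℕ):ℝ) = n * Real.Gamma n := by
      push_cast; rw [← Real.Gamma_add_one hn0]
    have : Real.Gamma n ≠ 0 := (Real.Gamma_pos_of_pos (by positivity)).ne'
    rw [e1, e2, e3]
    field_simp

lemma limit_integral (γ : ℝ) (hγ : 0 < γ) (k : ℕ) (hk : 1 ≤ k) (c : ℝ) (hc : 0 < c) :
    ∫ s in Set.Ioi (0:ℝ), ∑ i ∈ Finset.range k,
      Real.exp (-((s / c) ^ (1 / γ))) * ((s / c) ^ (1 / γ)) ^ i / i.factorial
      = c * Real.Gamma (k + γ) / Real.Gamma k := by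
  have hcomp := integral_comp_mul_left_Ioi (fun s => ∑ i ∈ Finset.range k,
      Real.exp (-(s ^ (1 / γ))) * (s ^ (1 / γ)) ^ i / i.factorial) 0 (inv_pos.2 hc)
  have e : ∀ s : ℝ, c⁻¹ * s = s / c := fun s => by ring
  simp_rw [e] at hcomp
  rw [hcomp, inv_inv, zero_div, smul_eq_mul, mul_div_assoc, ← gamma_sum γ hγ k hk]
  congr 1
  have hq : ∀ i : ℕ, (-1:ℝ) < i / γ := fun i => by
    have : (0:ℝ) ≤ i / γ := by positivity
    linarith
  have hf : ∀ i : ℕ, Set.EqOn (fun s : ℝ => Real.exp (-(s ^ (1 / γ))) * (s ^ (1 / γ)) ^ i / i.factorial)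
      (fun s => (s ^ ((i:ℝ) / γ) * Real.exp (-1 * s ^ (1 / γ))) / i.factorial) (Set.Ioi 0) := by
    intro i s hs
    have hs0 : (0:ℝ) ≤ s := (Set.mem_Ioi.1 hs).le
    simp only
    rw [← Real.rpow_natCast, ← Real.rpow_mul hs0, mul_comm (Real.exp _), neg_one_mul,
      one_div_mul_eq_div]
  have hi : ∀ i : ℕ, IntegrableOn (fun s : ℝ => (s ^ ((i:ℝ) / γ) * Real.exp (-1 * s ^ (1 / γ))) / i.factorial) (Set.Ioi 0) :=
    fun i => (integrableOn_rpow_mul_exp_neg_mul_rpow (hq i) (by positivity) one_pos).div_const _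
  rw [integral_finsetSum _ fun i _ => (hi i).congr_fun (hf i).symm measurableSet_Ioi]
  refine Finset.sum_congr rfl fun i _ => ?_
  rw [setIntegral_congr_fun measurableSet_Ioi (hf i), integral_div,
    integral_rpow_mul_exp_neg_mul_rpow (by positivity) (hq i) one_pos, Real.one_rpow]
  congr 1
  have : ((i:ℝ) / γ + 1) / (1 / γ) = i + γ := by field_simp
  rw [this]
  simp

/-- Sandwich bounds for the inverse. -/
lemma series_bounds (γ : ℝ) (hγ : 0 < γ) (c : ℕ → ℝ) (hc : ∀ j, 0 ≤ c j)
    (hs1 : Summable c) (w : ℝ) (hw0 : 0 ≤ w) (hw1 : w ≤ 1)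
    (hsum : Summable fun j : ℕ => c j * w ^ ((j : ℝ) + γ)) :
    c 0 * w ^ γ ≤ ∑' j : ℕ, c j * w ^ ((j : ℝ) + γ) ∧
    ∑' j : ℕ, c j * w ^ ((j : ℝ) + γ) ≤ (c 0 + w * ∑' j, c j) * w ^ γ ∧
    ∑' j : ℕ, c j * w ^ ((j : ℝ) + γ) ≤ (∑' j, c j) * w ^ γ := by
  have hp : ∀ j : ℕ, w ^ ((j:ℝ) + γ) = w ^ j * w ^ γ := fun j => by
    rw [Real.rpow_add_of_nonneg hw0 (by positivity) hγ.le, Real.rpow_natCast]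
  have hwγ : 0 ≤ w ^ γ := Real.rpow_nonneg hw0 _
  refine ⟨?_, ?_, ?_⟩
  · have := hsum.le_tsum 0 (fun j _ => mul_nonneg (hc j) (Real.rpow_nonneg hw0 _))
    simpa using this
  · rw [hsum.tsum_eq_zero_add, add_mul]
    have hs1' : Summable fun j => c (j+1) := (summable_nat_add_iff 1).2 hs1
    refine add_le_add (by simp) ?_
    calc ∑' j : ℕ, c (j+1) * w ^ (((j+1 : ℕ) : ℝ) + γ)
        ≤ ∑' j : ℕ, c (j+1) * (w * w ^ γ) := by
          refine Summable.tsum_le_tsum (fun j => ?_)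
            ((summable_nat_add_iff 1 (f := fun j : ℕ => c j * w ^ ((j : ℝ) + γ))).2 hsum) (hs1'.mul_right _)
          rw [hp]
          refine mul_le_mul_of_nonneg_left ?_ (hc _)
          refine mul_le_mul_of_nonneg_right ?_ hwγ
          rw [pow_succ]
          exact mul_le_of_le_one_left hw0 (pow_le_one₀ hw0 hw1)
      _ = w * (∑' j, c (j+1)) * w ^ γ := by rw [tsum_mul_right]; ring
      _ ≤ _ := by
        have h0 := hc 0
        have h : ∑' j, c (j+1) ≤ ∑' j, c j := by
          rw [hs1.tsum_eq_zero_add]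
          linarith
        exact mul_le_mul_of_nonneg_right (mul_le_mul_of_nonneg_left h hw0) hwγ
  · rw [← tsum_mul_right]
    refine Summable.tsum_le_tsum (fun j => ?_) hsum (hs1.mul_right _)
    rw [hp]
    refine mul_le_mul_of_nonneg_left ?_ (hc _)
    exact mul_le_of_le_one_left hwγ (pow_le_one₀ hw0 hw1)
/-- In the setting of a separable metric space `M` with Borel probability
measure `μ`, point `x` and fixed `k ≥ 1`, with `D_k(N)` the `k`-th smallest of the distances
from `x` to `N` i.i.d. sites (product measure on `Fin N → M`): suppose there are `γ ∈ [0,1)`,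
`L > 0` and nonnegative reals `c_j` with `c_0 > 0` such that `A(l) = μ(closedBall x l)`
restricted to `[0, L]` is a continuous strictly increasing bijection onto `[0,1]` whose inverse
satisfies `Ainv w = ∑_j c_j w^(j+γ)` on `[0,1]`.  Then
`lim_{N→∞} N^γ E[D_k(N)] = c_0 Γ(k+γ)/Γ(k)`. -/
theorem kth_nearest_distance_leading_asymptotics
    {M : Type*} [MetricSpace M] [TopologicalSpace.SeparableSpace M]
    [MeasurableSpace M] [BorelSpace M]
    (μ : Measure M) [IsProbabilityMeasure μ]
    (x : M) (k : ℕ) (hk : 1 ≤ k)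
    (L : ℝ) (hL : 0 < L) (Ainv : ℝ → ℝ)
    (hcont : ContinuousOn (fun l => (μ (closedBall x l)).toReal) (Set.Icc 0 L))
    (hmono : StrictMonoOn (fun l => (μ (closedBall x l)).toReal) (Set.Icc 0 L))
    (hbij : Set.BijOn (fun l => (μ (closedBall x l)).toReal) (Set.Icc 0 L) (Set.Icc 0 1))
    (hinv : Set.InvOn Ainv (fun l => (μ (closedBall x l)).toReal) (Set.Icc 0 L) (Set.Icc 0 1))
    (γ : ℝ) (hγ0 : 0 ≤ γ) (hγ1 : γ < 1) (c : ℕ → ℝ) (hc : ∀ j, 0 ≤ c j) (hc0 : 0 < c 0)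
    (hsum : ∀ w ∈ Set.Icc (0:ℝ) 1, Summable fun j : ℕ => c j * w ^ ((j : ℝ) + γ))
    (hser : ∀ w ∈ Set.Icc (0:ℝ) 1, Ainv w = ∑' j : ℕ, c j * w ^ ((j : ℝ) + γ)) :
    Tendsto
      (fun N : ℕ => (N : ℝ) ^ γ *
        ∫ ω : Fin N → M, kthVal k (fun i => dist x (ω i)) ∂(Measure.pi fun _ : Fin N => μ))
      atTop (𝓝 (c 0 * Real.Gamma (k + γ) / Real.Gamma k)) := by
  have hAmono : Monotone (fun l => (μ (closedBall x l)).toReal) := fun a b hab =>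
    ENNReal.toReal_mono (measure_ne_top _ _) (measure_mono (closedBall_subset_closedBall hab))
  have hA0 : ∀ l, 0 ≤ (μ (closedBall x l)).toReal := fun l => ENNReal.toReal_nonneg
  have hA1 : ∀ l, (μ (closedBall x l)).toReal ≤ 1 := fun l =>
    ENNReal.toReal_le_of_le_ofReal zero_le_one (by simpa using prob_le_one)
  have hleft : ∀ l ∈ Set.Icc 0 L, Ainv (μ (closedBall x l)).toReal = l := fun l hl => hinv.1 hl
  have hAzero : (μ (closedBall x 0)).toReal = 0 := by
    obtain ⟨l, hl, h⟩ := hbij.surjOn (show (0:ℝ) ∈ Set.Icc (0:ℝ) 1 by simp)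
    exact le_antisymm ((hAmono hl.1).trans h.le) (hA0 0)
  have hAone : ∀ l, L ≤ l → (μ (closedBall x l)).toReal = 1 := by
    intro l' hl'
    obtain ⟨l, hl, h⟩ := hbij.surjOn (show (1:ℝ) ∈ Set.Icc (0:ℝ) 1 by simp)
    exact le_antisymm (hA1 _) (h.ge.trans (hAmono (hl.2.trans hl')))
  have hγ : 0 < γ := by
    rcases hγ0.lt_or_eq with h | h
    · exact h
    · exfalso
      subst h
      have h1 := hleft 0 ⟨le_rfl, hL.le⟩
      rw [hAzero, hser 0 (by simp)] at h1
      have h2 := (hsum 0 (by simp)).le_tsum 0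
        (fun j _ => mul_nonneg (hc j) (Real.rpow_nonneg le_rfl _))
      rw [h1] at h2
      simp at h2
      linarith
  have hs1 : Summable c := by simpa using hsum 1 (by simp)
  set C := ∑' j, c j with hC
  have hCpos : 0 < C := lt_of_lt_of_le hc0 (hs1.le_tsum 0 fun j _ => hc j)
  generalize hAdef : (fun l => (μ (closedBall x l)).toReal) = A at *
  have hAd : ∀ l, (μ (closedBall x l)).toReal = A l := fun l => congrFun hAdef l
  simp only [hAd] at hleft hAzero hAone hA0 hA1
  have hbd : ∀ l ∈ Set.Icc 0 L, c 0 * A l ^ γ ≤ l ∧ l ≤ (c 0 + A l * C) * A l ^ γ ∧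
      l ≤ C * A l ^ γ := by
    intro l hl
    have hm : A l ∈ Set.Icc (0:ℝ) 1 := ⟨hA0 l, hA1 l⟩
    have := series_bounds γ hγ c hc hs1 (A l) (hA0 l) (hA1 l) (hsum _ hm)
    rwa [← hser _ hm, hleft l hl] at this
  -- scaling facts
  have hNγ : ∀ N : ℕ, 1 ≤ N → (0:ℝ) < (N:ℝ) ^ γ := fun N hN =>
    Real.rpow_pos_of_pos (by exact_mod_cast hN) _
  have key : ∀ N : ℕ, 1 ≤ N → ∀ s : ℝ, 0 < s → ((N:ℝ) ^ γ)⁻¹ * s ≤ L →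
      c 0 * (N * A (((N:ℝ) ^ γ)⁻¹ * s)) ^ γ ≤ s ∧
      s ≤ (c 0 + A (((N:ℝ) ^ γ)⁻¹ * s) * C) * (N * A (((N:ℝ) ^ γ)⁻¹ * s)) ^ γ ∧
      s ≤ C * (N * A (((N:ℝ) ^ γ)⁻¹ * s)) ^ γ := by
    intro N hN s hs hle
    have hp := hNγ N hN
    obtain ⟨h1, h2, h3⟩ := hbd _ ⟨by positivity, hle⟩
    rw [Real.mul_rpow (by positivity) (hA0 _)]
    have es : s = (N:ℝ) ^ γ * (((N:ℝ) ^ γ)⁻¹ * s) := by field_simp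
    generalize ((N:ℝ) ^ γ)⁻¹ * s = l at *
    generalize (N:ℝ) ^ γ = q at *
    rw [es]
    refine ⟨?_, ?_, ?_⟩
    · calc _ = q * (c 0 * A l ^ γ) := by ring
        _ ≤ _ := by gcongr
    · calc _ ≤ q * ((c 0 + A l * C) * A l ^ γ) := by gcongr
        _ = _ := by ring
    · calc _ ≤ q * (C * A l ^ γ) := by gcongr
        _ = _ := by ring
  have hexp : ∀ N : ℕ, max k 1 ≤ N → (N : ℝ) ^ γ *
        ∫ ω : Fin N → M, kthVal k (fun i => dist x (ω i)) ∂(Measure.pi fun _ : Fin N => μ)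
      = ∫ s in Set.Ioi (0:ℝ), binTail k N (A (((N:ℝ) ^ γ)⁻¹ * s)) := by
    intro N hN
    rw [expect_eq μ x hk (le_of_max_le_left hN)]
    have := integral_comp_mul_left_Ioi (fun l => binTail k N (A l)) 0
      (inv_pos.2 (hNγ N (le_of_max_le_right hN)))
    rw [this, inv_inv, mul_zero, smul_eq_mul]
    simp only [hAd]
  clear hAd hAdef hbij hinv
  rw [← limit_integral γ hγ k hk (c 0) hc0]
  refine Tendsto.congr' (EventuallyEq.symm
    (eventually_atTop.2 ⟨max k 1, fun N hN => hexp N hN⟩)) ?_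
  refine tendsto_integral_filter_of_dominated_convergence
    (fun s => (∑ i ∈ Finset.range k, (2:ℝ) ^ i * Real.exp k) *
      Real.exp (-((s / C) ^ (1 / γ) / 2))) ?_ ?_ ?_ ?_
  · refine Eventually.of_forall fun N => ?_
    exact ((binTail_continuous k N).measurable.comp
      (hAmono.measurable.comp (measurable_const_mul _))).aestronglyMeasurable
  · refine eventually_atTop.2 ⟨max k 1, fun N hN => ?_⟩
    refine (ae_restrict_iff' measurableSet_Ioi).2 (ae_of_all _ fun s hs => ?_)
    have hs : 0 < s := hs
    have hkN := le_of_max_le_left hN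
    rw [Real.norm_of_nonneg (binTail_nonneg _ _ _ (hA0 _) (hA1 _))]
    rcases le_total (((N:ℝ) ^ γ)⁻¹ * s) L with hle | hle
    · refine (binTail_le k N _ (hA0 _) (hA1 _) hkN).trans ?_
      have h3 := (key N (le_of_max_le_right hN) s hs hle).2.2
      have h0 := hA0 (((N:ℝ) ^ γ)⁻¹ * s)
      generalize A (((N:ℝ) ^ γ)⁻¹ * s) = a at *
      have h4 : (s / C) ^ (1 / γ) ≤ N * a := by
        have h5 : s / C ≤ (N * a) ^ γ := by
          rw [div_le_iff₀ hCpos]; linarith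
        have h6 := Real.rpow_le_rpow (by positivity) h5 (show 0 ≤ 1 / γ by positivity)
        rwa [← Real.rpow_mul (by positivity), mul_one_div_cancel hγ.ne', Real.rpow_one] at h6
      gcongr
    · rw [hAone _ hle, binTail_one _ _ hkN]
      positivity
  · refine Integrable.const_mul ?_ _
    have h := integrableOn_rpow_mul_exp_neg_mul_rpow (s := 0) (p := 1 / γ)
      (b := (C ^ (1 / γ))⁻¹ / 2) (by norm_num) (by positivity) (by positivity)
    refine IntegrableOn.congr_fun h (fun s hs => ?_) measurableSet_Ioi
    have hs : 0 < s := hs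
    rw [Real.rpow_zero, one_mul, Real.div_rpow hs.le hCpos.le]
    congr 1
    ring
  · refine (ae_restrict_iff' measurableSet_Ioi).2 (ae_of_all _ fun s hs => ?_)
    have hs : 0 < s := hs
    refine binTail_tendsto k (fun N : ℕ => A (((N:ℝ) ^ γ)⁻¹ * s)) _ ?_
    have hl0 : Tendsto (fun N : ℕ => ((N:ℝ) ^ γ)⁻¹ * s) atTop (𝓝 0) := by
      have := ((tendsto_rpow_atTop hγ).comp tendsto_natCast_atTop_atTop).inv_tendsto_atTop.mul_const s
      simpa using this
    have hev : ∀ᶠ N : ℕ in atTop, 1 ≤ N ∧ ((N:ℝ) ^ γ)⁻¹ * s ≤ L :=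
      (eventually_ge_atTop 1).and (hl0.eventually (eventually_le_nhds hL))
    have ha0 : Tendsto (fun N : ℕ => A (((N:ℝ) ^ γ)⁻¹ * s)) atTop (𝓝 0) := by
      have hw : ContinuousWithinAt A (Set.Icc 0 L) 0 := hcont 0 ⟨le_rfl, hL.le⟩
      have hw' := hw.tendsto
      rw [hAzero] at hw'
      refine hw'.comp (tendsto_nhdsWithin_iff.2 ⟨hl0, ?_⟩)
      filter_upwards [hev] with N hN
      have := hNγ N hN.1
      exact ⟨by positivity, hN.2⟩
    have hpow : Tendsto (fun N : ℕ => ((N:ℝ) * A (((N:ℝ) ^ γ)⁻¹ * s)) ^ γ) atTop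
        (𝓝 (s / c 0)) := by
      have hlow : Tendsto (fun N : ℕ => s / (c 0 + A (((N:ℝ) ^ γ)⁻¹ * s) * C)) atTop
          (𝓝 (s / c 0)) := by
        have := (tendsto_const_nhds (x := s)).div ((tendsto_const_nhds (x := c 0)).add
          (ha0.mul_const C)) (by simpa using hc0.ne')
        simp only [zero_mul, add_zero] at this
        exact this
      refine tendsto_of_tendsto_of_tendsto_of_le_of_le' hlow tendsto_const_nhds ?_ ?_
      · filter_upwards [hev] with N hN
        have h2 := (key N hN.1 s hs hN.2).2.1
        have h0 := hA0 (((N:ℝ) ^ γ)⁻¹ * s)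
        rw [div_le_iff₀ (by positivity)]
        linarith
      · filter_upwards [hev] with N hN
        have h2 := (key N hN.1 s hs hN.2).1
        rw [le_div_iff₀ hc0]
        linarith
    have hfin := hpow.rpow_const (p := 1 / γ) (Or.inr (by positivity))
    refine hfin.congr fun N => ?_
    rw [← Real.rpow_mul (mul_nonneg (Nat.cast_nonneg _) (hA0 _)), mul_one_div_cancel hγ.ne',
      Real.rpow_one]
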